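/- Equivalence of the two characterizations of ambiguity: for every valid date D and every period p = (py, pm, pd), the computation is ambiguous in the intensional sense iff the two non-error rounding modes disagree, i.e. D +⊥ p = ⊥ if and only if D +↓ p ≠ D +↑ p. -/

import Mathlib

/-- A value is either a date `(y, m, d)` (a triple of integers in the
Gregorian calendar) or the error element `⊥`. -/
inductive DValue : Type
  | date (y m d : ℤ) : DValue
  | bot : DValue
deriving DecidableEq

/-- `nb_days(y, m)`: the number of days of month `m` in year `y`
(meaningful for `1 ≤ m ≤ 12`). A year is leap iff it is divisible by 4
and not by 100, or divisible by 400. -/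
def nbDays (y m : ℤ) : ℤ :=
  if m = 2 then (if (4 ∣ y ∧ ¬ (100 ∣ y)) ∨ 400 ∣ y then 29 else 28)
  else if m = 4 ∨ m = 6 ∨ m = 9 ∨ m = 11 then 30
  else 31

theorem nbDays_bounds (y m : ℤ) : 28 ≤ nbDays y m ∧ nbDays y m ≤ 31 := by
  unfold nbDays; split_ifs <;> omega

/-- A date `(y, m, d)` is valid iff `1 ≤ m ≤ 12` and `1 ≤ d ≤ nb_days(y, m)`. -/
def ValidDate (y m d : ℤ) : Prop :=
  1 ≤ m ∧ m ≤ 12 ∧ 1 ≤ d ∧ d ≤ nbDays y m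

/-- Year addition: `(y,m,d) +y n = (y+n,m,d)`; `⊥ +y n = ⊥`. -/
def DValue.addY : DValue → ℤ → DValue
  | .date y m d, n => .date (y + n) m d
  | .bot, _ => .bot

/-- Month addition on a date `(y, m, d)` (with `⊥` for a month component
outside `[1,12]`):
`(y,m,d) +m n = (y,m+n,d)` if `1 ≤ m+n ≤ 12`,
`= (y+1,m,d) +m (n−12)` if `m+n > 12`, `= (y−1,m,d) +m (n+12)` if `m+n < 1`. -/
def addMonths (y m d n : ℤ) : DValue :=
  if _h : 1 ≤ m ∧ m ≤ 12 then
    if _h1 : 1 ≤ m + n ∧ m + n ≤ 12 then .date y (m + n) d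
    else if _h2 : 12 < m + n then addMonths (y + 1) m d (n - 12)
    else addMonths (y - 1) m d (n + 12)
  else .bot
termination_by (m + n - 12).toNat + (1 - (m + n)).toNat
decreasing_by all_goals omega

/-- Month addition on values: `⊥ +m n = ⊥`. -/
def DValue.addM : DValue → ℤ → DValue
  | .date y m d, n => addMonths y m d n
  | .bot, _ => .bot

/-- Day addition, following the rules:
for `(y,m,d)` with `1 ≤ d ≤ nb_days(y,m)`:
`(y,m,d) +d n = (y,m,d+n)` if `1 ≤ d+n ≤ nb_days(y,m)`;
`= ((y,m,1) +m 1) +d (n − (nb_days(y,m) − d) − 1)` if `d+n > nb_days(y,m)`;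
`= (y,m,1) +d (d−1+n)` if `d+n ≤ 0` and `d > 1`;
if `n+1 ≤ 0` then, letting `(y',m',d') = (y,m,1) +m (−1)`,
`(y,m,1) +d n = (y',m',1) +d (n + nb_days(y',m'))`.
If `d < 1` or `d > nb_days(y,m)` (or the month is out of range), the result is `⊥`. -/
def addDays (y m d n : ℤ) : DValue :=
  if _hm : 1 ≤ m ∧ m ≤ 12 then
    if _hd : 1 ≤ d ∧ d ≤ nbDays y m then
      if _h1 : 1 ≤ d + n ∧ d + n ≤ nbDays y m then .date y m (d + n)
      else if _h2 : nbDays y m < d + n then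
        match addMonths y m 1 1 with
        | .date y' m' _ => addDays y' m' 1 (n - (nbDays y m - d) - 1)
        | .bot => .bot
      else if _h3 : 1 < d then addDays y m 1 (d - 1 + n)
      else
        match _hprev : addMonths y m 1 (-1) with
        | .date y' m' _ => addDays y' m' 1 (n + nbDays y' m')
        | .bot => .bot
    else .bot
  else .bot
termination_by (if 0 ≤ n then n else 62 - n).toNat
decreasing_by
  · split_ifs <;> omega
  · split_ifs <;> omega
  · have h28 := nbDays_bounds y' m'
    split_ifs <;> omega

/-- Day addition on values: `⊥ +d n = ⊥`. -/
def DValue.addD : DValue → ℤ → DValue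
  | .date y m d, n => addDays y m d n
  | .bot, _ => .bot

/-- Rounding modes: down (`↓`), up (`↑`) and error (`⊥`). -/
inductive RMode : Type
  | down | up | err
deriving DecidableEq

/-- Rounding `rnd_r`: if `1 ≤ d ≤ nb_days(y,m)` then `rnd_r(y,m,d) = (y,m,d)`;
if `d > nb_days(y,m)` then `rnd_↓(y,m,d) = (y,m,nb_days(y,m))`,
`rnd_↑(y,m,d) = (y',m',1)` where `(y',m',d') = (y,m,d) +m 1`, and
`rnd_⊥(y,m,d) = ⊥`; if `d < 1` then `rnd_r(y,m,d) = ⊥`; `rnd_r(⊥) = ⊥`. -/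
def rnd (r : RMode) : DValue → DValue
  | .date y m d =>
    if 1 ≤ d ∧ d ≤ nbDays y m then .date y m d
    else if d < 1 then .bot
    else
      match r with
      | .down => .date y m (nbDays y m)
      | .up =>
        match addMonths y m d 1 with
        | .date y' m' _ => .date y' m' 1
        | .bot => .bot
      | .err => .bot
  | .bot => .bot

/-- A period `(py, pm, pd)`: a number of years, months and days. -/
structure Period : Type where
  py : ℤ
  pm : ℤ
  pd : ℤ
deriving DecidableEq

/-- Derived addition of a period with rounding mode `r`:
`e +r (py, pm, pd) = rnd_r((e +y py) +m pm) +d pd`. -/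
def addPeriod (r : RMode) (e : DValue) (p : Period) : DValue :=
  ((rnd r ((e.addY p.py).addM p.pm)).addD p.pd)

/-- Strict lexicographic order on dates. -/
def DateLt (y1 m1 d1 y2 m2 d2 : ℤ) : Prop :=
  y1 < y2 ∨ (y1 = y2 ∧ (m1 < m2 ∨ (m1 = m2 ∧ d1 < d2)))

/-- Large lexicographic order on dates. -/
def DateLe (y1 m1 d1 y2 m2 d2 : ℤ) : Prop :=
  y1 < y2 ∨ (y1 = y2 ∧ (m1 < m2 ∨ (m1 = m2 ∧ d1 ≤ d2)))

/-- Comparison lifted to values: it holds only between two dates. -/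
def DValue.lt : DValue → DValue → Prop
  | .date y1 m1 d1, .date y2 m2 d2 => DateLt y1 m1 d1 y2 m2 d2
  | _, _ => False

/-- Comparison lifted to values: it holds only between two dates. -/
def DValue.le : DValue → DValue → Prop
  | .date y1 m1 d1, .date y2 m2 d2 => DateLe y1 m1 d1 y2 m2 d2
  | _, _ => False

/-- A value is a valid date: it is not `⊥` and its components are valid. -/
def IsValidDate : DValue → Prop
  | .date y m d => ValidDate y m d
  | .bot => False

def yearOf : DValue → ℤ
  | .date y _ _ => y
  | .bot => 0

def monthOf : DValue → ℤ
  | .date _ m _ => m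
  | .bot => 0

def dayOf : DValue → ℤ
  | .date _ _ d => d
  | .bot => 0

/-- Date units: year, month, day. -/
inductive DUnit : Type
  | year | month | day
deriving DecidableEq

/-- Addition of `n` units to a value. -/
def addU : DUnit → DValue → ℤ → DValue
  | .year, v, n => v.addY n
  | .month, v, n => v.addM n
  | .day, v, n => v.addD n

/-- Componentwise addition of periods. -/
def Period.add (p q : Period) : Period :=
  ⟨p.py + q.py, p.pm + q.pm, p.pd + q.pd⟩

def leapsB (y : ℤ) : ℤ := (y-1)/4 - (y-1)/100 + (y-1)/400

def cumD (y m : ℤ) : ℤ :=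
  31 * (m-1) - (if 2 < m then 31 - nbDays y 2 else 0) - (if 4 < m then 1 else 0)
    - (if 6 < m then 1 else 0) - (if 9 < m then 1 else 0) - (if 11 < m then 1 else 0)

def ordD (y m d : ℤ) : ℤ := 365 * y + leapsB y + cumD y m + d

theorem leapsB_succ (y : ℤ) : leapsB (y+1) = leapsB y + (nbDays y 2 - 28) := by
  unfold leapsB nbDays
  simp only [if_true]
  split_ifs <;> omega

theorem ordD_next_year (y d : ℤ) : ordD (y+1) 1 d = ordD y 12 d + 31 := by
  unfold ordD
  rw [leapsB_succ]
  unfold cumD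
  norm_num
  ring

theorem ordD_next_month (y m d : ℤ) (h1 : 1 ≤ m) (h2 : m < 12) :
    ordD y (m+1) d = ordD y m d + nbDays y m := by
  unfold ordD cumD
  obtain rfl | hm := eq_or_ne m 2
  · norm_num; ring
  · have : nbDays y m = if m = 4 ∨ m = 6 ∨ m = 9 ∨ m = 11 then 30 else 31 := by
      unfold nbDays; rw [if_neg hm]
    rw [this]
    generalize nbDays y 2 = k
    clear this
    interval_cases m <;> simp at hm ⊢ <;> ring

theorem addMonths_next (y m d : ℤ) (h1 : 1 ≤ m) (h2 : m ≤ 12) :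
    ∃ y' m', addMonths y m d 1 = .date y' m' d ∧ 1 ≤ m' ∧ m' ≤ 12 ∧
      ∀ e, ordD y' m' e = ordD y m e + nbDays y m := by
  obtain rfl | hm := eq_or_ne m 12
  · refine ⟨y+1, 1, ?_, by norm_num, by norm_num, ?_⟩
    · rw [addMonths]; norm_num; rw [addMonths]; norm_num
    · intro e; rw [ordD_next_year]; simp [nbDays]
  · refine ⟨y, m+1, ?_, by omega, by omega, fun e => ordD_next_month y m e h1 (by omega)⟩
    rw [addMonths, dif_pos ⟨h1, h2⟩, dif_pos (by omega)]

theorem addMonths_prev (y m d : ℤ) (h1 : 1 ≤ m) (h2 : m ≤ 12) :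
    ∃ y' m', addMonths y m d (-1) = .date y' m' d ∧ 1 ≤ m' ∧ m' ≤ 12 ∧
      ∀ e, ordD y m e = ordD y' m' e + nbDays y' m' := by
  obtain rfl | hm := eq_or_ne m 1
  · refine ⟨y-1, 12, ?_, by norm_num, by norm_num, ?_⟩
    · rw [addMonths]; norm_num; rw [addMonths]; norm_num
    · intro e
      have := ordD_next_year (y-1) e
      rw [sub_add_cancel] at this
      rw [this]; simp [nbDays]
  · refine ⟨y, m-1, ?_, by omega, by omega, fun e => ?_⟩
    · rw [addMonths, dif_pos ⟨h1, h2⟩, dif_pos (by omega)]; rfl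
    · have := ordD_next_month y (m-1) e (by omega) (by omega)
      rwa [sub_add_cancel] at this

theorem addMonths_ok (y m d n : ℤ) (h1 : 1 ≤ m) (h2 : m ≤ 12) :
    ∃ y' m', addMonths y m d n = .date y' m' d ∧ 1 ≤ m' ∧ m' ≤ 12 := by
  rw [addMonths, dif_pos ⟨h1, h2⟩]
  split_ifs with h3 h4
  · exact ⟨_, _, rfl, h3.1, h3.2⟩
  · exact addMonths_ok _ m d _ h1 h2
  · exact addMonths_ok _ m d _ h1 h2
termination_by (m + n - 12).toNat + (1 - (m + n)).toNat
decreasing_by all_goals omega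

theorem addDays_ok (y m d n : ℤ) (h1 : 1 ≤ m) (h2 : m ≤ 12) (h3 : 1 ≤ d) (h4 : d ≤ nbDays y m) :
    ∃ y' m' d', addDays y m d n = .date y' m' d' ∧ ordD y' m' d' = ordD y m d + n := by
  have hlin : ∀ y m d : ℤ, ordD y m d = ordD y m 1 + d - 1 := by
    intro y m d; unfold ordD; ring
  rw [addDays, dif_pos ⟨h1, h2⟩, dif_pos ⟨h3, h4⟩]
  split_ifs with h5 h6 h7
  · exact ⟨_, _, _, rfl, by unfold ordD; ring⟩
  · obtain ⟨y1, m1, e, a, b, c⟩ := addMonths_next y m 1 h1 h2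
    rw [e]
    have hb := nbDays_bounds y1 m1
    obtain ⟨y', m', d', e', o⟩ := addDays_ok y1 m1 1 (n - (nbDays y m - d) - 1) a b le_rfl (by omega)
    refine ⟨y', m', d', e', ?_⟩
    have := c 1
    have := hlin y m d
    omega
  · obtain ⟨y', m', d', e', o⟩ := addDays_ok y m 1 (d - 1 + n) h1 h2 le_rfl (by omega)
    refine ⟨y', m', d', e', ?_⟩
    have := hlin y m d
    omega
  · obtain ⟨y1, m1, e, a, b, c⟩ := addMonths_prev y m 1 h1 h2
    have hb := nbDays_bounds y1 m1
    obtain ⟨y', m', d', e', o⟩ := addDays_ok y1 m1 1 (n + nbDays y1 m1) a b le_rfl (by omega)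
    refine ⟨y', m', d', ?_, ?_⟩
    · split
      · rename_i heq
        rw [e] at heq
        injection heq with q1 q2 q3
        subst q1 q2
        exact e'
      · rename_i heq
        rw [e] at heq
        cases heq
    · have := c 1
      have := hlin y m d
      omega
termination_by (if 0 ≤ n then n else 62 - n).toNat
decreasing_by
  · split_ifs <;> omega
  · split_ifs <;> omega
  · split_ifs <;> omega

theorem ambiguity_characterizations_equiv (y m d : ℤ) (p : Period)
    (h : ValidDate y m d) :
    addPeriod RMode.err (DValue.date y m d) p = DValue.bot ↔
      addPeriod RMode.down (DValue.date y m d) p ≠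
        addPeriod RMode.up (DValue.date y m d) p := by
  obtain ⟨h1, h2, h3, h4⟩ := h
  obtain ⟨y1, m1, e, a, b⟩ := addMonths_ok (y + p.py) m d p.pm h1 h2
  simp only [addPeriod, DValue.addY, DValue.addM, e, rnd]
  by_cases hd : d ≤ nbDays y1 m1
  · simp only [if_pos (And.intro h3 hd), DValue.addD]
    obtain ⟨y', m', d', e', _⟩ := addDays_ok y1 m1 d p.pd a b h3 hd
    simp [e']
  · have hn : ¬ (1 ≤ d ∧ d ≤ nbDays y1 m1) := by omega
    have hn' : ¬ d < 1 := by omega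
    obtain ⟨y2, m2, e2, a2, b2, c2⟩ := addMonths_next y1 m1 d a b
    simp only [if_neg hn, if_neg hn', e2, DValue.addD, true_iff]
    have hb1 := nbDays_bounds y1 m1
    have hb2 := nbDays_bounds y2 m2
    obtain ⟨y', m', d', e', o'⟩ := addDays_ok y1 m1 (nbDays y1 m1) p.pd a b (by omega) le_rfl
    obtain ⟨y'', m'', d'', e'', o''⟩ := addDays_ok y2 m2 1 p.pd a2 b2 le_rfl (by omega)
    rw [e', e'']
    intro hc
    injection hc with q1 q2 q3
    subst q1 q2 q3
    have := c2 1
    have : ordD y1 m1 (nbDays y1 m1) = ordD y1 m1 1 + nbDays y1 m1 - 1 := by unfold ordD; ring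
    omega
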